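/- arXiv:2101.07157 — 11 statements merged into one kernel-verified Lean document; each statement's English description precedes it below -/
import Mathlib

section
/- If F is ε-approximately diminishing returns with respect to f and F(𝟎) = 0, then F is ε-approximately k-submodular with respect to the same f, i.e. (1−ε)·f(x) ≤ F(x) ≤ (1+ε)·f(x) for every k-state x. -/
/-!
Both `f` and `F` vanish at the all-unassigned state, so the value of either at `x` is the telescoping
sum of its marginal gains along any order of assigning the elements of `supp x`. Each marginal of
`F` is within a factor `1 ± ε` of that of `f`, hence so is the sum. The telescoping is an induction
on `(supp x).card`: unassigning one supported element `e` of `x` gives `y = Function.update x e 0`,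
and `x = kadd y e (x e)`.
-/

/-- The support of a `k`-state: elements assigned a nonzero value. -/
def supp {V : Type*} [Fintype V] {k : ℕ} [DecidableEq V] (x : V → Fin (k+1)) : Finset V :=
  Finset.univ.filter (fun e => x e ≠ 0)

/-- The `i`-th support of a `k`-state: elements assigned value `i`. -/
def suppi {V : Type*} [Fintype V] {k : ℕ} [DecidableEq V] (x : V → Fin (k+1)) (i : Fin (k+1)) :
    Finset V :=
  Finset.univ.filter (fun e => x e = i)

/-- The partial order on `k`-states: `y` agrees with `x` on the support of `x`. -/
def kle {V : Type*} {k : ℕ} (x y : V → Fin (k+1)) : Prop :=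
  ∀ e, x e ≠ 0 → y e = x e

/-- `kadd x e i` is the `k`-state agreeing with `x` except that `e` is assigned `i`. -/
def kadd {V : Type*} [DecidableEq V] {k : ℕ} (x : V → Fin (k+1)) (e : V) (i : Fin (k+1)) :
    V → Fin (k+1) :=
  Function.update x e i

/-- The marginal gain `Δ_{e,i} g (x) = g(x + (e,i)) - g(x)`. -/
def marg {V : Type*} [DecidableEq V] {k : ℕ} (g : (V → Fin (k+1)) → ℝ) (e : V)
    (i : Fin (k+1)) (x : V → Fin (k+1)) : ℝ :=
  g (kadd x e i) - g x

/-- `f` is monotone and satisfies the diminishing returns property (monotone k-submodular). -/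
def KSubmodular {V : Type*} [Fintype V] [DecidableEq V] {k : ℕ}
    (f : (V → Fin (k+1)) → ℝ) : Prop :=
  (∀ x y : V → Fin (k+1), kle x y → f x ≤ f y) ∧
  (∀ x y : V → Fin (k+1), kle x y → ∀ e, e ∉ supp y → ∀ i : Fin (k+1), i ≠ 0 →
    marg f e i x ≥ marg f e i y)

/-- `F` is ε-approximately k-submodular (ε-AS) with respect to `f`. -/
def EpsAS {V : Type*} [Fintype V] [DecidableEq V] {k : ℕ} (ε : ℝ)
    (F f : (V → Fin (k+1)) → ℝ) : Prop :=
  (∀ x, 0 ≤ f x) ∧ KSubmodular f ∧ f (fun _ => (0 : Fin (k+1))) = 0 ∧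
  (∀ x : V → Fin (k+1), (1 - ε) * f x ≤ F x ∧ F x ≤ (1 + ε) * f x)

/-- `F` is ε-approximately diminishing returns (ε-ADR) with respect to `f`. -/
def EpsADR {V : Type*} [Fintype V] [DecidableEq V] {k : ℕ} (ε : ℝ)
    (F f : (V → Fin (k+1)) → ℝ) : Prop :=
  (∀ x, 0 ≤ f x) ∧ KSubmodular f ∧ f (fun _ => (0 : Fin (k+1))) = 0 ∧
  (∀ x : V → Fin (k+1), ∀ e, e ∉ supp x → ∀ i : Fin (k+1), i ≠ 0 →
    (1 - ε) * marg f e i x ≤ marg F e i x ∧ marg F e i x ≤ (1 + ε) * marg f e i x)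

/-- A greedy TS sequence of length `B` for `G` (run of k-Greedy-TS on `G` with budget `B`). -/
def GreedyTS {V : Type*} [Fintype V] [DecidableEq V] {k : ℕ}
    (G : (V → Fin (k+1)) → ℝ) (B : ℕ) (x : ℕ → V → Fin (k+1))
    (es : ℕ → V) (is : ℕ → Fin (k+1)) : Prop :=
  x 0 = (fun _ => (0 : Fin (k+1))) ∧
  ∀ j, 1 ≤ j → j ≤ B →
    es j ∉ supp (x (j-1)) ∧ is j ≠ 0 ∧
    x j = kadd (x (j-1)) (es j) (is j) ∧
    (∀ e, e ∉ supp (x (j-1)) → ∀ i : Fin (k+1), i ≠ 0 →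
      marg G (es j) (is j) (x (j-1)) ≥ marg G e i (x (j-1)))

/-- A greedy IS sequence for `G` with individual budgets `Bv` (run of k-Greedy-IS on `G`). -/
def GreedyIS {V : Type*} [Fintype V] [DecidableEq V] {k : ℕ}
    (G : (V → Fin (k+1)) → ℝ) (Bv : Fin (k+1) → ℕ) (B : ℕ) (x : ℕ → V → Fin (k+1))
    (es : ℕ → V) (is : ℕ → Fin (k+1)) : Prop :=
  x 0 = (fun _ => (0 : Fin (k+1))) ∧
  ∀ j, 1 ≤ j → j ≤ B →
    es j ∉ supp (x (j-1)) ∧ is j ≠ 0 ∧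
    (suppi (x (j-1)) (is j)).card < Bv (is j) ∧
    x j = kadd (x (j-1)) (es j) (is j) ∧
    (∀ e, e ∉ supp (x (j-1)) → ∀ i : Fin (k+1), i ≠ 0 →
      (suppi (x (j-1)) i).card < Bv i →
      marg G (es j) (is j) (x (j-1)) ≥ marg G e i (x (j-1)))

/-- If `F` is ε-ADR w.r.t. `f` and `F 𝟎 = 0`, then `F` is ε-AS w.r.t. the same `f`. -/
theorem stmt0 {V : Type*} [Fintype V] [DecidableEq V] {k : ℕ} (hk : 1 ≤ k)
    (ε : ℝ) (hε0 : 0 < ε) (hε1 : ε < 1)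
    (F f : (V → Fin (k+1)) → ℝ)
    (hADR : EpsADR ε F f)
    (hF0 : F (fun _ => (0 : Fin (k+1))) = 0) :
    EpsAS ε F f := by
  obtain ⟨hnn, hsub, hf0, hmarg⟩ := hADR
  refine ⟨hnn, hsub, hf0, fun x => ?_⟩
  induction hn : (supp x).card generalizing x with
  | zero =>
    have hx : x = fun _ => (0 : Fin (k+1)) := by
      funext e
      by_contra he
      have hmem : e ∈ supp x := by simpa [supp] using he
      rw [Finset.card_eq_zero.mp hn] at hmem
      simp at hmem
    rw [hx, hf0, hF0]
    simp
  | succ n ih =>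
    obtain ⟨e, he⟩ : (supp x).Nonempty := Finset.card_pos.mp (by omega)
    have hxe : x e ≠ 0 := by simpa [supp] using he
    have hsupp : supp (Function.update x e 0) = (supp x).erase e := by
      ext a
      by_cases ha : a = e
      · subst ha
        simp [supp]
      · simp [supp, ha]
    have hy := ih (Function.update x e 0) (by
      rw [hsupp, Finset.card_erase_of_mem he, hn]
      rfl)
    have hm := hmarg (Function.update x e 0) e (by simp [hsupp]) (x e) hxe
    have hadd : kadd (Function.update x e 0) e (x e) = x := by simp [kadd]
    simp only [marg, hadd] at hm
    constructor <;> linarith [hm.1, hm.2, hy.1, hy.2]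
end

section
/- For every real ε with 0 < ε < 1 there exist a finite type V, a nonnegative monotone submodular set function f : Finset V → ℝ with f(∅) = 0, and a function F : Finset V → ℝ with F(∅) = 0 and (1−ε)·f(S) ≤ F(S) ≤ (1+ε)·f(S) for every S ⊆ V (so F is ε-approximately submodular with respect to f), together with a set X ⊆ V and an element u ∉ X such that F(X ∪ {u}) − F(X) < (1−ε)·(f(X ∪ {u}) − f(X)) (so F fails the ε-approximately-diminishing-returns lower bound with respect to f). -/
/-- for every 0 < ε < 1 there is an ε-approximately submodular `F` (w.r.t. a
nonnegative monotone submodular `f`) that violates the ε-ADR lower bound on marginal gains. -/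
theorem stmt1 (ε : ℝ) (hε0 : 0 < ε) (hε1 : ε < 1) :
    ∃ (V : Type) (_ : Fintype V) (_ : DecidableEq V) (f F : Finset V → ℝ),
      (∀ S : Finset V, 0 ≤ f S) ∧
      (∀ S T : Finset V, S ⊆ T → f S ≤ f T) ∧
      (∀ S T : Finset V, f S + f T ≥ f (S ∪ T) + f (S ∩ T)) ∧
      f ∅ = 0 ∧ F ∅ = 0 ∧
      (∀ S : Finset V, (1 - ε) * f S ≤ F S ∧ F S ≤ (1 + ε) * f S) ∧
      ∃ (X : Finset V) (u : V), u ∉ X ∧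
        F (insert u X) - F X < (1 - ε) * (f (insert u X) - f X) := by
  -- `f` is the cardinality on two points, and `F` is the largest admissible value before `false`
  -- is added and the smallest one after: the gain at `{true}` drops to `1 - 3ε < 1 - ε`.
  refine ⟨Bool, inferInstance, inferInstance, fun S => (S.card : ℝ),
    fun S => if false ∈ S then (1 - ε) * S.card else (1 + ε) * S.card,
    fun S => by positivity, fun S T h => by dsimp only; exact_mod_cast Finset.card_le_card h,
    fun S T => by dsimp only; exact_mod_cast (Finset.card_union_add_card_inter S T).le,
    by simp, by simp, fun S => ?_, {true}, false, by simp, ?_⟩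
  · have h : 0 ≤ ε * (S.card : ℝ) := by positivity
    dsimp only
    split_ifs <;> constructor <;> linarith
  · norm_num
    linarith
end

section
/- If F is ε-approximately diminishing returns with respect to f, then F is a-submodular with a = (1−ε)/(1+ε): for all k-states x ⪯ y, every e ∉ supp(y), and every i ∈ {1,…,k}, one has Δ_{e,i}F(x) ≥ ((1−ε)/(1+ε))·Δ_{e,i}F(y). -/
/-- ε-ADR implies a-submodularity with a = (1-ε)/(1+ε). -/
theorem stmt2 {V : Type*} [Fintype V] [DecidableEq V] {k : ℕ} (hk : 1 ≤ k)
    (ε : ℝ) (hε0 : 0 < ε) (hε1 : ε < 1)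
    (F f : (V → Fin (k+1)) → ℝ)
    (hADR : EpsADR ε F f) :
    ∀ x y : V → Fin (k+1), kle x y → ∀ e, e ∉ supp y → ∀ i : Fin (k+1), i ≠ 0 →
      marg F e i x ≥ ((1 - ε) / (1 + ε)) * marg F e i y := by
  obtain ⟨-, ⟨-, hdr⟩, -, hF⟩ := hADR
  intro x y hxy e he i hi
  have hex : e ∉ supp x := by
    simp only [supp, Finset.mem_filter, Finset.mem_univ, true_and, ne_eq, not_not] at he ⊢
    by_contra h
    exact h (hxy e h ▸ he)
  have hx := (hF x e hex i hi).1
  have hy := (hF y e he i hi).2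
  have hd : marg f e i y ≤ marg f e i x := hdr x y hxy e he i hi
  have hd' := mul_le_mul_of_nonneg_left hd (by linarith : (0 : ℝ) ≤ 1 - ε)
  have hy' := mul_le_mul_of_nonneg_left hy (by linarith : (0 : ℝ) ≤ 1 - ε)
  have hpos : 0 < 1 + ε := by linarith
  rw [ge_iff_le, div_mul_eq_mul_div, div_le_iff₀ hpos]
  -- The lower bound at `x` still has to be scaled by `1 + ε`.
  nlinarith [mul_le_mul_of_nonneg_left hx hpos.le,
    mul_le_mul_of_nonneg_left hd' hpos.le]
end

section
/- Suppose F : Finset V → ℝ satisfies F(∅) = 0 and is ε-approximately diminishing returns with respect to a nonnegative monotone submodular f with f(∅) = 0, i.e. (1−ε)·Δ_u f(X) ≤ Δ_u F(X) ≤ (1+ε)·Δ_u f(X) for all X ⊆ V and u ∉ X, where 0 < ε < 1. Let B ≤ |V| and let ∅ = X₀ ⊆ X₁ ⊆ ⋯ ⊆ X_B be a greedy sequence for F, i.e. X_j = X_{j−1} ∪ {e_j} with e_j ∉ X_{j−1} and Δ_{e_j}F(X_{j−1}) ≥ Δ_e F(X_{j−1}) for every e ∉ X_{j−1}. Then, with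 a = (1−ε)/(1+ε), the greedy output satisfies F(X_B) ≥ (1 − e^{−a})·F(S) for every S ⊆ V with |S| ≤ B. -/
/-!
The marginals of `F` are within factors `1 ± ε` of those of `f`, and the marginals of `f` are
nonnegative and decreasing. Hence `F` is monotone, and adding the elements of `S` to `X` one at a
time raises `F` by at most `|S| / a` times the largest marginal of `F` at `X`, where
`a = (1 - ε) / (1 + ε)` (`adr_gain_le`). When `X` is a greedy iterate, this largest marginal is
the next greedy gain, so each greedy step shrinks the gap `F S - F (X j)` by a factor at most
`1 - a / B`. After `B` steps the gap is at most `(1 - a / B) ^ B * F S ≤ exp (-a) * F S`.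
-/

/-- Submodularity in its diminishing-returns form. -/
lemma submodular_marginal_le {V : Type*} [DecidableEq V] {f : Finset V → ℝ}
    (hfsub : ∀ S T : Finset V, f S + f T ≥ f (S ∪ T) + f (S ∩ T))
    {X Y : Finset V} (hXY : X ⊆ Y) {u : V} (hu : u ∉ Y) :
    f (insert u Y) - f Y ≤ f (insert u X) - f X := by
  have h := hfsub (insert u X) Y
  have h1 : insert u X ∪ Y = insert u Y := by
    rw [Finset.insert_union, Finset.union_eq_right.mpr hXY]
  have h2 : insert u X ∩ Y = X := by
    rw [Finset.insert_inter_of_notMem hu, Finset.inter_eq_left.mpr hXY]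
  rw [h1, h2] at h
  linarith

lemma le_union_of_le_insert {V : Type*} [DecidableEq V] {F : Finset V → ℝ}
    (h : ∀ (X : Finset V) (u : V), F X ≤ F (insert u X)) (X T : Finset V) :
    F X ≤ F (X ∪ T) := by
  induction T using Finset.induction_on with
  | empty => simp
  | insert e T _ ih =>
    rw [Finset.union_insert]
    exact ih.trans (h _ _)

/-- If every marginal of `F` at `X` is at most `δ`, then adding a set `T` to `X` raises `F` by at
most `(1 + ε) / (1 - ε) * |T| * δ`: every marginal met along the way is compared with the
marginal of `f` there, then with that of `f` at `X`, then with that of `F` at `X`. -/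
lemma adr_gain_le {V : Type*} [DecidableEq V] {ε : ℝ} (hε0 : 0 < ε) (hε1 : ε < 1)
    {f F : Finset V → ℝ}
    (hfsub : ∀ S T : Finset V, f S + f T ≥ f (S ∪ T) + f (S ∩ T))
    (hADR : ∀ (X : Finset V) (u : V), u ∉ X →
      (1 - ε) * (f (insert u X) - f X) ≤ F (insert u X) - F X ∧
      F (insert u X) - F X ≤ (1 + ε) * (f (insert u X) - f X))
    {X : Finset V} {δ : ℝ} (hδ0 : 0 ≤ δ)
    (hδ : ∀ e, e ∉ X → F (insert e X) - F X ≤ δ) (T : Finset V) :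
    (1 - ε) * (F (X ∪ T) - F X) ≤ (1 + ε) * (T.card * δ) := by
  induction T using Finset.induction_on with
  | empty => simp
  | insert e T heT ih =>
    rw [Finset.union_insert, Finset.card_insert_of_notMem heT]
    push_cast
    have hpos : 0 ≤ (1 + ε) * δ := by positivity
    by_cases heX : e ∈ X
    · rw [Finset.insert_eq_of_mem (Finset.mem_union_left _ heX)]
      linarith
    · have heXT : e ∉ X ∪ T := by simp [heX, heT]
      have h1 := mul_le_mul_of_nonneg_left (hADR _ _ heXT).2 (sub_nonneg.mpr hε1.le)
      have h2 := mul_le_mul_of_nonneg_left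
        (submodular_marginal_le hfsub (Finset.subset_union_left (s₂ := T)) heXT)
        (mul_nonneg (sub_nonneg.mpr hε1.le) (by linarith : (0 : ℝ) ≤ 1 + ε))
      have h3 := mul_le_mul_of_nonneg_left ((hADR _ _ heX).1.trans (hδ e heX))
        (by linarith : (0 : ℝ) ≤ 1 + ε)
      linarith

/-- greedy on an ε-ADR set function `F` achieves ratio 1 - e^{-(1-ε)/(1+ε)}. -/
theorem stmt3 {V : Type*} [Fintype V] [DecidableEq V]
    (ε : ℝ) (hε0 : 0 < ε) (hε1 : ε < 1)
    (f F : Finset V → ℝ)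
    (hf0 : ∀ S : Finset V, 0 ≤ f S)
    (hfmono : ∀ S T : Finset V, S ⊆ T → f S ≤ f T)
    (hfsub : ∀ S T : Finset V, f S + f T ≥ f (S ∪ T) + f (S ∩ T))
    (hfe : f ∅ = 0) (hFe : F ∅ = 0)
    (hADR : ∀ (X : Finset V) (u : V), u ∉ X →
      (1 - ε) * (f (insert u X) - f X) ≤ F (insert u X) - F X ∧
      F (insert u X) - F X ≤ (1 + ε) * (f (insert u X) - f X))
    (B : ℕ) (hB : B ≤ Fintype.card V)
    (X : ℕ → Finset V) (es : ℕ → V)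
    (hX0 : X 0 = ∅)
    (hstep : ∀ j, 1 ≤ j → j ≤ B →
      es j ∉ X (j-1) ∧ X j = insert (es j) (X (j-1)) ∧
      ∀ e, e ∉ X (j-1) →
        F (insert (es j) (X (j-1))) - F (X (j-1)) ≥
          F (insert e (X (j-1))) - F (X (j-1))) :
    ∀ S : Finset V, S.card ≤ B →
      F (X B) ≥ (1 - Real.exp (-((1 - ε) / (1 + ε)))) * F S := by 
  intro S hS
  have hFins : ∀ (Y : Finset V) (u : V), F Y ≤ F (insert u Y) := by
    intro Y u
    by_cases hu : u ∈ Y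
    · rw [Finset.insert_eq_of_mem hu]
    · have h1 := (hADR Y u hu).1
      have h2 := mul_nonneg (sub_nonneg.mpr hε1.le)
        (sub_nonneg.mpr (hfmono Y _ (Finset.subset_insert u Y)))
      linarith
  have hFS : 0 ≤ F S := by
    have h := le_union_of_le_insert hFins ∅ S
    rwa [hFe, Finset.empty_union] at h
  rcases Nat.eq_zero_or_pos B with rfl | hBpos
  · have hSe : S = ∅ := Finset.card_eq_zero.mp (Nat.le_zero.mp hS)
    simp [hSe, hX0, hFe]
  have hB0 : (0 : ℝ) < B := by exact_mod_cast hBpos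
  have hB1 : (1 : ℝ) ≤ B := by exact_mod_cast hBpos
  have hp : 0 < 1 + ε := by linarith
  set a : ℝ := (1 - ε) / (1 + ε) with ha
  have ha1 : a ≤ 1 := by rw [ha, div_le_one hp]; linarith
  have haB : a ≤ B := ha1.trans hB1
  have hc : 0 ≤ 1 - a / B := sub_nonneg.mpr ((div_le_one hB0).mpr haB)
  have hgap : ∀ j, j ≤ B → F S - F (X j) ≤ (1 - a / B) ^ j * F S := by
    intro j
    induction j with
    | zero => intro _; simp [hX0, hFe]
    | succ j ih =>
      intro hj
      obtain ⟨_, hXj, hmax⟩ := hstep (j + 1) (by omega) hj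
      rw [Nat.add_sub_cancel] at hXj hmax
      rw [← hXj] at hmax
      have hδ0 : 0 ≤ F (X (j + 1)) - F (X j) := by
        rw [hXj]; exact sub_nonneg.mpr (hFins _ _)
      have hgain := adr_gain_le hε0 hε1 hfsub hADR hδ0 hmax S
      have hSU : F S ≤ F (X j ∪ S) := by
        rw [Finset.union_comm]; exact le_union_of_le_insert hFins S (X j)
      have hcard : (S.card : ℝ) ≤ B := by exact_mod_cast hS
      have hstep' : (1 - ε) * (F S - F (X j)) ≤ (1 + ε) * (B * (F (X (j + 1)) - F (X j))) :=
        calc (1 - ε) * (F S - F (X j)) ≤ (1 - ε) * (F (X j ∪ S) - F (X j)) :=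
              mul_le_mul_of_nonneg_left (by linarith) (by linarith)
          _ ≤ _ := hgain
          _ ≤ _ := mul_le_mul_of_nonneg_left (mul_le_mul_of_nonneg_right hcard hδ0) hp.le
      have hgreedy : a / B * (F S - F (X j)) ≤ F (X (j + 1)) - F (X j) := by
        rw [ha, div_div, div_mul_eq_mul_div, div_le_iff₀ (mul_pos hp hB0)]
        linarith
      calc F S - F (X (j + 1)) ≤ (1 - a / B) * (F S - F (X j)) := by linarith
        _ ≤ (1 - a / B) * ((1 - a / B) ^ j * F S) :=
            mul_le_mul_of_nonneg_left (ih (by omega)) hc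
        _ = (1 - a / B) ^ (j + 1) * F S := by ring
  have h1 := hgap B le_rfl
  have h2 := mul_le_mul_of_nonneg_right (Real.one_sub_div_pow_le_exp_neg haB) hFS
  linarith
end

section
/- Suppose F is ε-approximately k-submodular with respect to f, and let x⁽⁰⁾ = 𝟎, x⁽¹⁾, …, x⁽ᴮ⁾ be a greedy TS sequence of length B for F with 1 ≤ B ≤ |V|. Then F(x⁽ᴮ⁾) ≥ [(1−ε)² / (2(1−ε+εB)(1+ε))]·F(o) for every k-state o with |supp(o)| ≤ B. (This is the approximation ratio of algorithm k-Greedy-TS applied to an ε-AS function under the total size constraint.) -/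
theorem mem_supp' {V : Type*} [Fintype V] [DecidableEq V] {k : ℕ} {x : V → Fin (k+1)} {e : V} :
    e ∈ supp x ↔ x e ≠ 0 := by
  simp [supp]

theorem kle_kadd {V : Type*} [Fintype V] [DecidableEq V] {k : ℕ} {x : V → Fin (k+1)} {e : V}
    (he : e ∉ supp x) (i : Fin (k+1)) : kle x (kadd x e i) := by
  intro a ha
  have : a ≠ e := by
    rintro rfl
    exact he (mem_supp'.2 ha)
  simp [kadd, this]

/-- A state above `x` with no further support is `x` itself. -/
theorem eq_of_kle_of_sdiff {V : Type*} [Fintype V] [DecidableEq V] {k : ℕ}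
    {x o : V → Fin (k+1)} (h : kle x o) (hD : supp o \ supp x = ∅) : o = x := by
  funext a
  by_cases ha : x a = 0
  · by_contra hne
    have : a ∈ supp o \ supp x := by
      simp only [Finset.mem_sdiff, mem_supp']
      exact ⟨fun h0 => hne (h0.trans ha.symm), fun h => h ha⟩
    simp [hD] at this
  · exact h a ha

/-- One exchange step: if `x ⪯ o` and `(e', i')` is added to `x`, then some pair of `o` outside
`x` (the one at `e'` if there is one) can be traded for `(e', i')`, and the loss in `f` is at most
a marginal gain of `f` at `x`. -/
theorem exists_exchange {V : Type*} [Fintype V] [DecidableEq V] {k : ℕ}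
    {f : (V → Fin (k+1)) → ℝ} (hf : KSubmodular f) {x o : V → Fin (k+1)} (hxo : kle x o)
    {e' : V} {i' : Fin (k+1)} (he' : e' ∉ supp x) (hi' : i' ≠ 0) :
    ∃ o' : V → Fin (k+1), kle (kadd x e' i') o' ∧
      (supp o' \ supp (kadd x e' i')).card ≤ (supp o \ supp x).card - 1 ∧
      ∃ e, e ∉ supp x ∧ ∃ i : Fin (k+1), i ≠ 0 ∧ f o - f o' ≤ marg f e i x := by
  obtain ⟨hmono, hdr⟩ := hf
  rcases (supp o \ supp x).eq_empty_or_nonempty with hD | hD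
  · -- Here `o = x`, and the new state is just the greedy successor.
    obtain rfl := eq_of_kle_of_sdiff hxo hD
    refine ⟨kadd o e' i', fun _ _ => rfl, by simp, e', he', i', hi', ?_⟩
    have := hmono _ _ (kle_kadd he' i')
    unfold marg
    linarith
  · obtain ⟨e, heD, hee⟩ : ∃ e ∈ supp o \ supp x, e' ∈ supp o → e = e' := by
      by_cases h : e' ∈ supp o
      · exact ⟨e', Finset.mem_sdiff.2 ⟨h, he'⟩, fun _ => rfl⟩
      · obtain ⟨e, he⟩ := hD
        exact ⟨e, he, fun hmem => absurd hmem h⟩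
    obtain ⟨heo, hex⟩ := Finset.mem_sdiff.1 heD
    -- `h` is the common part of `o` and the new state, still above `x`.
    set h : V → Fin (k+1) := Function.update o e 0 with hh
    have hhe : e ∉ supp h := by simp [mem_supp', hh]
    have hhe' : e' ∉ supp h := by
      rw [mem_supp', not_not]
      by_cases h1 : e' = e
      · simp [hh, h1]
      · have : e' ∉ supp o := fun h2 => h1 (hee h2).symm
        rw [mem_supp', not_not] at this
        simp [hh, h1, this]
    have hxh : kle x h := by
      intro a ha
      have : a ≠ e := by
        rintro rfl
        exact hex (mem_supp'.2 ha)
      simp [hh, this, hxo a ha]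
    have hho : kadd h e (o e) = o := by simp [kadd, hh]
    refine ⟨kadd h e' i', ?_, ?_, e, hex, o e, mem_supp'.1 heo, ?_⟩
    · intro a ha
      by_cases h1 : a = e'
      · simp [kadd, h1]
      · simp only [kadd, Function.update_of_ne h1] at ha ⊢
        exact hxh a ha
    · rw [← Finset.card_erase_of_mem heD]
      refine Finset.card_le_card fun a ha => ?_
      simp only [Finset.mem_sdiff, mem_supp', not_not] at ha
      obtain ⟨ha1, ha2⟩ := ha
      have h1 : a ≠ e' := by
        rintro rfl
        simp [kadd, hi'] at ha2
      simp only [kadd, Function.update_of_ne h1] at ha1 ha2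
      have h2 : a ≠ e := by
        rintro rfl
        simp [hh] at ha1
      simp only [hh, Function.update_of_ne h2] at ha1
      simp [Finset.mem_erase, mem_supp', h2, ha1, ha2]
    · have h1 := hdr _ _ hxh e hhe (o e) (mem_supp'.1 heo)
      have h2 := hmono _ _ (kle_kadd hhe' i')
      have h3 : marg f e (o e) h = f o - f h := by rw [marg, hho]
      linarith

/-- The hybrid state after `j` exchanges: it lies above `x j`, retains at most `B - j` pairs of
`o`, and the accumulated loss from `o` is bounded by `(1 + c * j) * f (x j)`. The hypothesis on
the marginal gains says that each step of the sequence is greedy for `f` up to the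
factor `1 + c`. -/
theorem exists_hybrid {V : Type*} [Fintype V] [DecidableEq V] {k : ℕ}
    {f : (V → Fin (k+1)) → ℝ} (hf : KSubmodular f) (hf0 : ∀ x, 0 ≤ f x)
    {c : ℝ} (hc : 0 ≤ c) {B : ℕ} {x : ℕ → V → Fin (k+1)} {es : ℕ → V} {is : ℕ → Fin (k+1)}
    (hx0 : x 0 = fun _ => 0)
    (hstep : ∀ j < B, es (j+1) ∉ supp (x j) ∧ is (j+1) ≠ 0 ∧
      x (j+1) = kadd (x j) (es (j+1)) (is (j+1)) ∧
      ∀ e, e ∉ supp (x j) → ∀ i : Fin (k+1), i ≠ 0 → f (kadd (x j) e i) ≤ (1 + c) * f (x (j+1)))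
    {o : V → Fin (k+1)} (ho : (supp o).card ≤ B) :
    ∀ j ≤ B, ∃ o' : V → Fin (k+1), kle (x j) o' ∧ (supp o' \ supp (x j)).card ≤ B - j ∧
      f o ≤ f o' + (1 + c * j) * f (x j) := by
  intro j
  induction j with
  | zero =>
    intro _
    refine ⟨o, ?_, ?_, ?_⟩
    · intro a ha
      simp [hx0] at ha
    · exact (Finset.card_le_card Finset.sdiff_subset).trans (by simpa using ho)
    · have := hf0 (x 0)
      simpa using this
  | succ j ih =>
    intro hj
    obtain ⟨o₁, h1, h2, h3⟩ := ih (by omega)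
    obtain ⟨he, hi, hx, hg⟩ := hstep j (by omega)
    obtain ⟨o₂, g1, g2, e, g3, i, g4, g5⟩ := exists_exchange hf h1 he hi
    rw [← hx] at g1 g2
    refine ⟨o₂, g1, by omega, ?_⟩
    have h4 := hg e g3 i g4
    have h5 : f (x j) ≤ f (x (j+1)) := by
      rw [hx]
      exact hf.1 _ _ (kle_kadd he _)
    have h6 : c * j * f (x j) ≤ c * j * f (x (j+1)) := by gcongr
    unfold marg at g5
    push_cast
    linarith

/-- approximation ratio of k-Greedy-TS applied to an ε-AS function `F`. -/
theorem stmt4 {V : Type*} [Fintype V] [DecidableEq V] {k : ℕ} (hk : 1 ≤ k)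
    (ε : ℝ) (hε0 : 0 < ε) (hε1 : ε < 1)
    (F f : (V → Fin (k+1)) → ℝ)
    (hAS : EpsAS ε F f)
    (B : ℕ) (hB1 : 1 ≤ B) (hB : B ≤ Fintype.card V)
    (x : ℕ → V → Fin (k+1)) (es : ℕ → V) (is : ℕ → Fin (k+1))
    (hgr : GreedyTS F B x es is) :
    ∀ o : V → Fin (k+1), (supp o).card ≤ B →
      F (x B) ≥ ((1 - ε)^2 / (2 * (1 - ε + ε * (B : ℝ)) * (1 + ε))) * F o := by
  intro o ho
  obtain ⟨hf0, hf, -, hFf⟩ := hAS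
  obtain ⟨hx0, hgr⟩ := hgr
  have hε : 0 < 1 - ε := by linarith
  obtain ⟨o', h1, h2, h3⟩ := exists_hybrid (c := 2 * ε / (1 - ε)) (es := es) (is := is)
    hf hf0 (by positivity) hx0
    (fun j hj => by
      obtain ⟨g1, g2, g3, g4⟩ := hgr (j+1) (by omega) (by omega)
      simp only [Nat.add_sub_cancel] at g1 g3 g4
      refine ⟨g1, g2, g3, fun e he i hi => ?_⟩
      have g5 := g4 e he i hi
      unfold marg at g5
      rw [← g3] at g5
      have g6 := (hFf (kadd (x j) e i)).1
      have g7 := (hFf (x (j+1))).2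
      have g8 : 1 + 2 * ε / (1 - ε) = (1 + ε) / (1 - ε) := by
        field_simp
        ring
      rw [g8, div_mul_eq_mul_div, le_div_iff₀ hε]
      linarith) ho B le_rfl
  have hoB : o' = x B := eq_of_kle_of_sdiff h1 (Finset.card_eq_zero.1 (by omega))
  rw [hoB] at h3
  have h4 : (1 - ε) * f o ≤ 2 * (1 - ε + ε * B) * f (x B) := by
    have h5 := mul_le_mul_of_nonneg_left h3 hε.le
    have h6 : (1 - ε) * (f (x B) + (1 + 2 * ε / (1 - ε) * B) * f (x B))
        = 2 * (1 - ε + ε * B) * f (x B) := by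
      field_simp
      ring
    linarith
  have hP : 0 < 1 - ε + ε * (B : ℝ) := by positivity
  rw [ge_iff_le, div_mul_eq_mul_div, div_le_iff₀ (by positivity)]
  calc (1 - ε)^2 * F o ≤ (1 - ε)^2 * ((1 + ε) * f o) := by
        gcongr
        exact (hFf o).2
    _ = (1 - ε) * (1 + ε) * ((1 - ε) * f o) := by ring
    _ ≤ (1 - ε) * (1 + ε) * (2 * (1 - ε + ε * B) * f (x B)) := by gcongr
    _ = (1 - ε) * f (x B) * (2 * (1 - ε + ε * B) * (1 + ε)) := by ring
    _ ≤ F (x B) * (2 * (1 - ε + ε * B) * (1 + ε)) := by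
        gcongr
        exact (hFf (x B)).1
end

section
/- Suppose F is ε-approximately k-submodular with respect to f. Let x and o' be k-states with x ⪯ o', let e, u ∈ V satisfy x e = x u = 0 and o' e = o' u = 0, let i, ℓ ∈ {1,…,k}, and assume the greedy-choice inequality Δ_{e,i}F(x) ≥ Δ_{u,ℓ}F(x). Then ((1+ε)/(1−ε))·f(x+(e,i)) − f(x) ≥ f(o'+(u,ℓ)) − f(o'+(e,i)). (This is the single-step inequality used in the analysis of k-Greedy-TS, where x plays the role of x⁽ʲ⁻¹⁾, o' of o⁽ʲ⁻¹ᐟ²⁾, (e,i) of the greedily selected pair, and (u,ℓ) of the displaced optimal assignment.) -/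
/-- single-step inequality in the analysis of k-Greedy-TS for ε-AS functions. -/
theorem stmt5 {V : Type*} [Fintype V] [DecidableEq V] {k : ℕ} (hk : 1 ≤ k)
    (ε : ℝ) (hε0 : 0 < ε) (hε1 : ε < 1)
    (F f : (V → Fin (k+1)) → ℝ)
    (hAS : EpsAS ε F f)
    (x o' : V → Fin (k+1)) (hxo : kle x o')
    (e u : V) (hxe : x e = 0) (hxu : x u = 0) (hoe : o' e = 0) (hou : o' u = 0)
    (i l : Fin (k+1)) (hi : i ≠ 0) (hl : l ≠ 0)
    (hgr : marg F e i x ≥ marg F u l x) :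
    ((1 + ε) / (1 - ε)) * f (kadd x e i) - f x ≥ f (kadd o' u l) - f (kadd o' e i) := by
  obtain ⟨-, ⟨hmono, hdr⟩, -, hF⟩ := hAS
  have h1 : 0 < 1 - ε := by linarith
  have hdim := hdr x o' hxo u (by simp [supp, hou]) l hl
  have hle : kle o' (kadd o' e i) := by
    intro v hv
    -- `v` lies in the support of `o'`, so it is not the newly assigned `e`
    have hve : v ≠ e := by
      rintro rfl
      exact hv hoe
    simp [kadd, hve]
  have hm := hmono _ _ hle
  have hgreedy : f (kadd x u l) ≤ (1 + ε) / (1 - ε) * f (kadd x e i) := by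
    rw [div_mul_eq_mul_div, le_div_iff₀ h1]
    have hl1 := (hF (kadd x u l)).1
    have hu1 := (hF (kadd x e i)).2
    simp only [marg] at hgr
    linarith
  simp only [marg] at hdim
  linarith
end

section
/- Suppose F satisfies F(𝟎) = 0 and is ε-approximately diminishing returns with respect to f, and let x⁽⁰⁾ = 𝟎, x⁽¹⁾, …, x⁽ᴮ⁾ be a greedy TS sequence of length B for F with 1 ≤ B ≤ |V|. Then F(x⁽ᴮ⁾) ≥ ((1−ε)/2)·F(o) for every k-state o with |supp(o)| ≤ B. (This is the approximation ratio of algorithm k-Greedy-TS applied to an ε-ADR function under the total size constraint.) -/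
lemma mem_supp_iff {V : Type*} [Fintype V] [DecidableEq V] {k : ℕ} (x : V → Fin (k+1)) (e : V) :
    e ∈ supp x ↔ x e ≠ 0 := by
  simp [supp]

lemma eq_of_kle_of_sdiff_empty {V : Type*} [Fintype V] [DecidableEq V] {k : ℕ}
    {x p : V → Fin (k+1)} (hxp : kle x p) (hem : supp p \ supp x = ∅) : p = x := by
  funext a
  by_cases ha : x a = 0
  · by_contra h
    have : a ∈ supp p \ supp x := by
      rw [Finset.mem_sdiff, mem_supp_iff, mem_supp_iff]
      exact ⟨fun h0 => h (h0.trans ha.symm), not_not.2 ha⟩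
    simp [hem] at this
  · exact hxp a ha

lemma marg_F_nonneg {V : Type*} [Fintype V] [DecidableEq V] {k : ℕ} {ε : ℝ} (hε1 : ε < 1)
    {F f : (V → Fin (k+1)) → ℝ} (hADR : EpsADR ε F f) {x : V → Fin (k+1)} {e : V}
    (he : x e = 0) {i : Fin (k+1)} (hi : i ≠ 0) : 0 ≤ marg F e i x := by
  obtain ⟨-, ⟨hmono, -⟩, -, hm⟩ := hADR
  have h1 := (hm x e (by simp [mem_supp_iff, he]) i hi).1
  have h2 : 0 ≤ marg f e i x := by
    refine sub_nonneg.2 (hmono _ _ fun a ha => ?_)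
    have : a ≠ e := by rintro rfl; exact ha he
    simp [kadd, this]
  exact (mul_nonneg (by linarith) h2).trans h1

/-- Diminishing returns for `f`, transferred to `F` with multiplicative loss
`(1 + ε) / (1 - ε)`. -/
lemma marg_F_compare {V : Type*} [Fintype V] [DecidableEq V] {k : ℕ} {ε : ℝ} (hε0 : 0 < ε)
    (hε1 : ε < 1) {F f : (V → Fin (k+1)) → ℝ} (hADR : EpsADR ε F f) {x y : V → Fin (k+1)}
    (hxy : kle x y) {e : V} (he : y e = 0) {i : Fin (k+1)} (hi : i ≠ 0) :
    (1 - ε) * marg F e i y ≤ (1 + ε) * marg F e i x := by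
  obtain ⟨-, ⟨-, hdr⟩, -, hm⟩ := hADR
  have hx : x e = 0 := by
    by_contra h
    exact h ((hxy e h).symm.trans he)
  have hey : e ∉ supp y := by simp [mem_supp_iff, he]
  have h1 := (hm y e hey i hi).2
  have h2 := (hm x e (by simp [mem_supp_iff, hx]) i hi).1
  have h3 := hdr x y hxy e hey i hi
  have hp : 0 ≤ 1 - ε := by linarith
  have hq : 0 ≤ 1 + ε := by linarith
  calc (1 - ε) * marg F e i y ≤ (1 - ε) * ((1 + ε) * marg f e i y) := by gcongr
    _ ≤ (1 - ε) * ((1 + ε) * marg f e i x) := by gcongr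
    _ = (1 + ε) * ((1 - ε) * marg f e i x) := by ring
    _ ≤ (1 + ε) * marg F e i x := by gcongr

/-- One exchange: when greedy adds its best pair `(e, i)` to `x`, a competitor `p ⪰ x` can be
changed into `q ⪰ x + (e, i)` with one element fewer to spare, losing at most
`(1 + ε) / (1 - ε)` times the gain of greedy. -/
lemma exchange_step {V : Type*} [Fintype V] [DecidableEq V] {k : ℕ} {ε : ℝ} (hε0 : 0 < ε)
    (hε1 : ε < 1) {F f : (V → Fin (k+1)) → ℝ} (hADR : EpsADR ε F f) {x p : V → Fin (k+1)}
    (hxp : kle x p) {e : V} (he : x e = 0) {i : Fin (k+1)} (hi : i ≠ 0)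
    (hbest : ∀ a, x a = 0 → ∀ b : Fin (k+1), b ≠ 0 → marg F a b x ≤ marg F e i x) :
    ∃ q, kle (kadd x e i) q ∧
      (supp q \ supp (kadd x e i)).card ≤ (supp p \ supp x).card - 1 ∧
      (1 - ε) * F p ≤ (1 - ε) * F q + (1 + ε) * marg F e i x := by
  have hp : 0 ≤ 1 - ε := by linarith
  have hgain := marg_F_nonneg hε1 hADR he hi
  rcases (supp p \ supp x).eq_empty_or_nonempty with hem | ⟨a₀, ha₀⟩
  · -- With nothing to spare, `p` equals `x` and simply follows greedy.
    have hpx : p = x := eq_of_kle_of_sdiff_empty hxp hem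
    subst hpx
    refine ⟨kadd p e i, fun _ _ => rfl, by simp, ?_⟩
    have h1 : F (kadd p e i) = F p + marg F e i p := by simp [marg]
    rw [h1]
    nlinarith
  · -- The removed element must be `e` itself if `p` already assigns `e`.
    obtain ⟨a, hpa, hxa, hae⟩ : ∃ a, p a ≠ 0 ∧ x a = 0 ∧ (p e ≠ 0 → a = e) := by
      by_cases hpe : p e = 0
      · rw [Finset.mem_sdiff, mem_supp_iff, mem_supp_iff, not_not] at ha₀
        exact ⟨a₀, ha₀.1, ha₀.2, fun h => absurd hpe h⟩
      · exact ⟨e, hpe, he, fun _ => rfl⟩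
    have ha : a ∈ supp p \ supp x := by
      rw [Finset.mem_sdiff, mem_supp_iff, mem_supp_iff, not_not]
      exact ⟨hpa, hxa⟩
    set h := Function.update p a 0 with hh
    have hxh : kle x h := by
      intro c hc
      have : c ≠ a := by rintro rfl; exact hc hxa
      simpa [hh, this] using hxp c hc
    have hha : h a = 0 := by simp [hh]
    have hhe : h e = 0 := by
      by_cases hc : e = a
      · rw [hc, hha]
      · have : p e = 0 := by
          by_contra h0
          exact hc (hae h0).symm
        simp [hh, hc, this]
    refine ⟨kadd h e i, ?_, ?_, ?_⟩
    · intro c hc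
      by_cases hce : c = e
      · simp [kadd, hce]
      · simp only [kadd, Function.update_of_ne hce] at hc ⊢
        exact hxh c hc
    · rw [← Finset.card_erase_of_mem ha]
      refine Finset.card_le_card fun c hc => ?_
      simp only [Finset.mem_sdiff, Finset.mem_erase, mem_supp_iff, not_not] at hc ⊢
      obtain ⟨hc1, hc2⟩ := hc
      have hce : c ≠ e := by
        rintro rfl
        exact hi (by simpa [kadd] using hc2)
      simp only [kadd, Function.update_of_ne hce] at hc1 hc2
      have hca : c ≠ a := by
        rintro rfl
        exact hc1 hha
      exact ⟨hca, by simpa [hh, hca] using hc1, hc2⟩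
    · have h1 := marg_F_compare hε0 hε1 hADR hxh hha hpa
      have h2 := hbest a hxa (p a) hpa
      have h3 := marg_F_nonneg hε1 hADR hhe hi
      have h4 : kadd h a (p a) = p := by simp [kadd, hh]
      have h5 : (1 + ε) * marg F a (p a) x ≤ (1 + ε) * marg F e i x :=
        mul_le_mul_of_nonneg_left h2 (by linarith)
      have h6 : marg F a (p a) h = F p - F h := by rw [marg, h4]
      have h7 : F h ≤ F (kadd h e i) := sub_nonneg.1 h3
      have h8 := mul_le_mul_of_nonneg_left h7 hp
      rw [h6] at h1
      linarith

/-- approximation ratio of k-Greedy-TS applied to an ε-ADR function `F`. -/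
theorem stmt6 {V : Type*} [Fintype V] [DecidableEq V] {k : ℕ} (hk : 1 ≤ k)
    (ε : ℝ) (hε0 : 0 < ε) (hε1 : ε < 1)
    (F f : (V → Fin (k+1)) → ℝ)
    (hADR : EpsADR ε F f)
    (hF0 : F (fun _ => (0 : Fin (k+1))) = 0)
    (B : ℕ) (hB1 : 1 ≤ B) (hB : B ≤ Fintype.card V)
    (x : ℕ → V → Fin (k+1)) (es : ℕ → V) (is : ℕ → Fin (k+1))
    (hgr : GreedyTS F B x es is) :
    ∀ o : V → Fin (k+1), (supp o).card ≤ B →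
      F (x B) ≥ ((1 - ε) / 2) * F o := by
  intro o ho
  obtain ⟨hx0, hstep⟩ := hgr
  have key : ∀ j, j ≤ B → ∃ p, kle (x j) p ∧ (supp p \ supp (x j)).card ≤ B - j ∧
      (1 - ε) * F o ≤ (1 - ε) * F p + (1 + ε) * F (x j) := by
    intro j
    induction j with
    | zero =>
      intro _
      refine ⟨o, ?_, ?_, ?_⟩
      · intro e he
        simp [hx0] at he
      · exact (Finset.card_le_card Finset.sdiff_subset).trans (by simpa using ho)
      · rw [hx0, hF0]
        simp
    | succ j ih =>
      intro hj
      obtain ⟨p, hp1, hp2, hp3⟩ := ih (by omega)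
      obtain ⟨he, hi, hxj, hbest⟩ := hstep (j + 1) (by omega) hj
      simp only [Nat.add_sub_cancel, mem_supp_iff, not_not] at he hxj hbest
      obtain ⟨q, hq1, hq2, hq3⟩ := exchange_step hε0 hε1 hADR hp1 he hi hbest
      refine ⟨q, hxj ▸ hq1, ?_, ?_⟩
      · rw [hxj]
        omega
      · rw [hxj]
        rw [marg] at hq3
        linarith
  obtain ⟨p, hp1, hp2, hp3⟩ := key B le_rfl
  have hpx : p = x B := eq_of_kle_of_sdiff_empty hp1 (Finset.card_eq_zero.1 (by omega))
  rw [hpx] at hp3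
  linarith
end

section
/- Suppose F satisfies F(𝟎) = 0 and is ε-approximately diminishing returns with respect to f, let B₁,…,B_k ≥ 1 be individual size budgets with B = B₁+⋯+B_k ≤ |V|, and let x⁽⁰⁾ = 𝟎, x⁽¹⁾, …, x⁽ᴮ⁾ be a greedy IS sequence for F with these budgets. Then F(x⁽ᴮ⁾) ≥ ((1−ε)/(3+ε))·F(o) for every k-state o with |supp_i(o)| ≤ B_i for all i ∈ {1,…,k}. (This is the approximation ratio of algorithm k-Greedy-IS applied to an ε-ADR function under the individual size constraints.) -/
section Helpers

variable {V : Type*} [Fintype V] [DecidableEq V] {k : ℕ}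

/-- Assigning an unassigned element does not decrease an ADR function (`i = 0` changes nothing). -/
lemma le_update {ε : ℝ} (hε1 : ε < 1) {F f : (V → Fin (k+1)) → ℝ} (hADR : EpsADR ε F f)
    {w : V → Fin (k+1)} {e : V} (he : w e = 0) (i : Fin (k+1)) :
    F w ≤ F (Function.update w e i) := by
  by_cases hi : i = 0
  · have : Function.update w e i = w := by rw [hi, ← he, Function.update_eq_self]
    rw [this]
  · obtain ⟨-, ⟨hmono, -⟩, -, hF⟩ := hADR
    have h1 := (hF w e (by simp [supp, he]) i hi).1
    have h2 : f w ≤ f (kadd w e i) := by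
      apply hmono
      intro a ha
      have hne : a ≠ e := by rintro rfl; exact ha he
      simp [kadd, hne]
    unfold marg at h1
    have h3 := mul_nonneg (sub_nonneg.2 hε1.le) (sub_nonneg.2 h2)
    unfold kadd at h1 h3
    linarith

/-- Unassigning an element outside the support of `x` from some `y ⪰ x` within the budgets costs at
most `(1+ε)/(1-ε)` times any bound `g` on the marginal gains available to the greedy step at `x`. -/
lemma le_unassign_add {ε : ℝ} (hε0 : 0 < ε) (hε1 : ε < 1) {F f : (V → Fin (k+1)) → ℝ}
    (hADR : EpsADR ε F f) {Bv : Fin (k+1) → ℕ} {x y : V → Fin (k+1)} {g : ℝ} (hg0 : 0 ≤ g)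
    (hg : ∀ e, e ∉ supp x → ∀ i : Fin (k+1), i ≠ 0 → (suppi x i).card < Bv i → marg F e i x ≤ g)
    (hxy : kle x y) (hy : ∀ i : Fin (k+1), i ≠ 0 → (suppi y i).card ≤ Bv i)
    {e : V} (he : x e = 0) :
    F y ≤ F (Function.update y e 0) + (1 + ε) / (1 - ε) * g := by
  have h1ε : 0 < 1 - ε := sub_pos.2 hε1
  by_cases hye : y e = 0
  · have : Function.update y e 0 = y := by rw [← hye, Function.update_eq_self]
    rw [this]
    have : 0 ≤ (1 + ε) / (1 - ε) * g := by positivity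
    linarith
  · have hes : e ∉ supp x := by simp [supp, he]
    obtain ⟨-, ⟨-, hdr⟩, -, hF⟩ := hADR
    have hcard : (suppi x (y e)).card < Bv (y e) := by
      refine lt_of_lt_of_le (Finset.card_lt_card ?_) (hy _ hye)
      refine Finset.ssubset_iff_of_subset ?_ |>.2 ⟨e, by simp [suppi], ?_⟩
      · intro a ha
        simp only [suppi, Finset.mem_filter, Finset.mem_univ, true_and] at ha ⊢
        rw [hxy a (by rw [ha]; exact hye), ha]
      · simp [suppi, he, Ne.symm hye]
    have hgr := hg e hes (y e) hye hcard
    have hes' : e ∉ supp (Function.update y e 0) := by simp [supp]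
    have hle : kle x (Function.update y e 0) := by
      intro a ha
      have hne : a ≠ e := by rintro rfl; exact ha he
      simp [hne, hxy a ha]
    have h1 := (hF _ e hes' (y e) hye).2
    have h2 := hdr _ _ hle e hes' (y e) hye
    have h3 := (hF x e hes (y e) hye).1
    have hback : kadd (Function.update y e 0) e (y e) = y := by simp [kadd]
    have h4 : marg F e (y e) (Function.update y e 0) = F y - F (Function.update y e 0) := by
      unfold marg; rw [hback]
    have h5 : marg f e (y e) x ≤ g / (1 - ε) := by
      rw [le_div_iff₀ h1ε]; linarith
    have h6 : (1 + ε) * marg f e (y e) (Function.update y e 0) ≤ (1 + ε) * (g / (1 - ε)) :=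
      mul_le_mul_of_nonneg_left (h2.le.trans h5) (by linarith)
    have h7 : (1 + ε) * (g / (1 - ε)) = (1 + ε) / (1 - ε) * g := by ring
    linarith

/-- One exchange: if the greedy step assigns `i` to `e` in `x` and `y ⪰ x` is within the budgets,
then some `y'` within the budgets extends the new greedy state, and `F y'` falls short of `F y` by
at most the cost of two unassignments. -/
lemma exists_exchange_s9 {ε : ℝ} (hε0 : 0 < ε) (hε1 : ε < 1) {F f : (V → Fin (k+1)) → ℝ}
    (hADR : EpsADR ε F f) {Bv : Fin (k+1) → ℕ} {x y : V → Fin (k+1)} {g : ℝ} (hg0 : 0 ≤ g)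
    (hg : ∀ e, e ∉ supp x → ∀ i : Fin (k+1), i ≠ 0 → (suppi x i).card < Bv i → marg F e i x ≤ g)
    (hxy : kle x y) (hy : ∀ i : Fin (k+1), i ≠ 0 → (suppi y i).card ≤ Bv i)
    {e : V} (he : x e = 0) {i : Fin (k+1)} (hi : i ≠ 0) (hcard : (suppi x i).card < Bv i) :
    ∃ y' : V → Fin (k+1), kle (kadd x e i) y' ∧
      (∀ i : Fin (k+1), i ≠ 0 → (suppi y' i).card ≤ Bv i) ∧
      F y ≤ F y' + 2 * ((1 + ε) / (1 - ε)) * g := by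
  have h1ε : 0 < 1 - ε := sub_pos.2 hε1
  have hcg : 0 ≤ (1 + ε) / (1 - ε) * g := by positivity
  have hrem := le_unassign_add hε0 hε1 hADR hg0 hg hxy hy he
  by_cases hye : y e = i
  · refine ⟨y, ?_, hy, by linarith⟩
    intro a ha
    by_cases hae : a = e
    · subst hae; simp [kadd, hye]
    · simp only [kadd, Function.update_of_ne hae] at ha ⊢
      exact hxy a ha
  by_cases hS : ∃ e', x e' = 0 ∧ y e' = i
  · obtain ⟨e', hxe', hye'⟩ := hS
    have hne : e ≠ e' := by rintro rfl; exact hye hye'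
    have hxz : kle x (Function.update y e 0) := by
      intro a ha
      have hae : a ≠ e := by rintro rfl; exact ha he
      simp [hae, hxy a ha]
    have hz : ∀ i : Fin (k+1), i ≠ 0 → (suppi (Function.update y e 0) i).card ≤ Bv i := by
      intro l hl
      refine le_trans (Finset.card_le_card ?_) (hy l hl)
      intro a ha
      simp only [suppi, Finset.mem_filter, Finset.mem_univ, true_and] at ha ⊢
      by_cases hae : a = e
      · subst hae; simp at ha; exact absurd ha.symm hl
      · rwa [Function.update_of_ne hae] at ha
    have hrem' := le_unassign_add hε0 hε1 hADR hg0 hg hxz hz hxe'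
    set z := Function.update (Function.update y e 0) e' 0 with hzdef
    have hm1 : F z ≤ F (Function.update z e i) :=
      le_update hε1 hADR (by simp [hzdef, hne]) i
    have hm2 : F (Function.update z e i) ≤ F (Function.update (Function.update z e i) e' (y e)) :=
      le_update hε1 hADR (by simp [hzdef, hne.symm]) (y e)
    have hswap : Function.update (Function.update z e i) e' (y e) = y ∘ Equiv.swap e e' := by
      funext a
      by_cases h1 : a = e'
      · subst h1; simp
      by_cases h2 : a = e
      · subst h2; simp [hne, hye']
      · simp [hzdef, h1, h2, Equiv.swap_apply_of_ne_of_ne h2 h1]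
    rw [hswap] at hm2
    refine ⟨y ∘ Equiv.swap e e', ?_, ?_, by linarith⟩
    · intro a ha
      by_cases h2 : a = e
      · subst h2; simp [kadd, hye']
      simp only [kadd, Function.update_of_ne h2] at ha ⊢
      have h1 : a ≠ e' := by rintro rfl; exact ha hxe'
      simpa [Equiv.swap_apply_of_ne_of_ne h2 h1] using hxy a ha
    · intro l hl
      refine le_trans (le_of_eq ?_) (hy l hl)
      refine Finset.card_equiv (Equiv.swap e e') ?_
      intro a
      simp [suppi]
  · push Not at hS
    have hm : F (Function.update y e 0) ≤ F (Function.update (Function.update y e 0) e i) :=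
      le_update hε1 hADR (by simp) i
    rw [Function.update_idem] at hm
    refine ⟨Function.update y e i, ?_, ?_, by linarith⟩
    · intro a ha
      by_cases hae : a = e
      · subst hae; simp [kadd]
      · simp only [kadd, Function.update_of_ne hae] at ha ⊢
        exact hxy a ha
    · intro l hl
      by_cases hli : l = i
      · subst hli
        -- every element of value `l` in `y` already has it in `x`, so type `l` has room for `e`
        have hsub : suppi (Function.update y e l) l ⊆ insert e (suppi x l) := by
          intro a ha
          simp only [suppi, Finset.mem_filter, Finset.mem_univ, true_and, Finset.mem_insert] at ha ⊢
          by_cases hae : a = e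
          · exact Or.inl hae
          · right
            rw [Function.update_of_ne hae] at ha
            by_cases hxa : x a = 0
            · exact absurd ha (hS a hxa)
            · rw [← hxy a hxa, ha]
        exact (Finset.card_le_card hsub).trans ((Finset.card_insert_le _ _).trans hcard)
      · refine le_trans (Finset.card_le_card ?_) (hy l hl)
        intro a ha
        simp only [suppi, Finset.mem_filter, Finset.mem_univ, true_and] at ha ⊢
        by_cases hae : a = e
        · subst hae; simp at ha; exact absurd ha.symm hli
        · rwa [Function.update_of_ne hae] at ha

lemma card_supp_eq_sum (y : V → Fin (k+1)) :
    (supp y).card = ∑ i ∈ Finset.univ.erase (0 : Fin (k+1)), (suppi y i).card := by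
  rw [Finset.card_eq_sum_card_fiberwise (f := y) (t := Finset.univ.erase (0 : Fin (k+1)))]
  · refine Finset.sum_congr rfl fun i hi => ?_
    congr 1
    ext a
    have hi0 : i ≠ 0 := (Finset.mem_erase.1 hi).1
    simp only [supp, suppi, Finset.mem_filter, Finset.mem_univ, true_and]
    exact ⟨fun h => h.2, fun h => ⟨by rw [h]; exact hi0, h⟩⟩
  · intro a ha
    simpa [supp] using ha

end Helpers

/-- approximation ratio of k-Greedy-IS applied to an ε-ADR function `F`. -/
theorem stmt9 {V : Type*} [Fintype V] [DecidableEq V] {k : ℕ} (hk : 1 ≤ k)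
    (ε : ℝ) (hε0 : 0 < ε) (hε1 : ε < 1)
    (F f : (V → Fin (k+1)) → ℝ)
    (hADR : EpsADR ε F f)
    (hF0 : F (fun _ => (0 : Fin (k+1))) = 0)
    (Bv : Fin (k+1) → ℕ) (hBv : ∀ i : Fin (k+1), i ≠ 0 → 1 ≤ Bv i)
    (B : ℕ) (hBdef : B = ∑ i ∈ Finset.univ.erase (0 : Fin (k+1)), Bv i)
    (hB : B ≤ Fintype.card V)
    (x : ℕ → V → Fin (k+1)) (es : ℕ → V) (is : ℕ → Fin (k+1))
    (hgr : GreedyIS F Bv B x es is) :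
    ∀ o : V → Fin (k+1), (∀ i : Fin (k+1), i ≠ 0 → (suppi o i).card ≤ Bv i) →
      F (x B) ≥ ((1 - ε) / (3 + ε)) * F o := by
  intro o ho
  have h1ε : 0 < 1 - ε := sub_pos.2 hε1
  obtain ⟨hx0, hstep⟩ := hgr
  have key : ∀ j, j ≤ B → (supp (x j)).card = j ∧ ∃ y : V → Fin (k+1), kle (x j) y ∧
      (∀ i : Fin (k+1), i ≠ 0 → (suppi y i).card ≤ Bv i) ∧
      F o ≤ F y + 2 * ((1 + ε) / (1 - ε)) * F (x j) := by
    intro j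
    induction j with
    | zero =>
      intro _
      refine ⟨by simp [hx0, supp], o, ?_, ho, by simp [hx0, hF0]⟩
      intro a ha
      simp [hx0] at ha
    | succ j ih =>
      intro hj
      obtain ⟨hc, y, hxy, hy, hFy⟩ := ih (by omega)
      obtain ⟨hes, his, hcard, hxj, hgreedy⟩ := hstep (j+1) (by omega) hj
      rw [Nat.add_sub_cancel] at hes hcard hxj hgreedy
      have he0 : x j (es (j+1)) = 0 := by simpa [supp] using hes
      have hg0 : 0 ≤ marg F (es (j+1)) (is (j+1)) (x j) :=
        sub_nonneg.2 (le_update hε1 hADR he0 _)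
      obtain ⟨y', hxy', hy', hF'⟩ :=
        exists_exchange_s9 hε0 hε1 hADR hg0 hgreedy hxy hy he0 his hcard
      refine ⟨?_, y', hxj ▸ hxy', hy', ?_⟩
      · have : supp (x (j+1)) = insert (es (j+1)) (supp (x j)) := by
          ext a
          simp only [hxj, supp, kadd, Finset.mem_filter, Finset.mem_univ, true_and,
            Finset.mem_insert]
          by_cases hae : a = es (j+1)
          · simp [hae, his]
          · simp [hae]
        rw [this, Finset.card_insert_of_notMem hes, hc]
      · have hm : marg F (es (j+1)) (is (j+1)) (x j) = F (x (j+1)) - F (x j) := by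
          rw [hxj]; rfl
        rw [hm] at hF'
        linarith
  obtain ⟨hc, y, hxy, hy, hF⟩ := key B le_rfl
  have hsub : supp (x B) ⊆ supp y := by
    intro a ha
    simp only [supp, Finset.mem_filter, Finset.mem_univ, true_and] at ha ⊢
    rwa [hxy a ha]
  have hcy : (supp y).card ≤ (supp (x B)).card := by
    rw [hc, card_supp_eq_sum, hBdef]
    exact Finset.sum_le_sum fun i hi => hy i (Finset.mem_erase.1 hi).1
  have hseq := Finset.eq_of_subset_of_card_le hsub hcy
  have hyx : y = x B := by
    funext a
    by_cases ha : x B a = 0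
    · have : a ∉ supp y := by rw [← hseq]; simp [supp, ha]
      rw [ha]
      simpa [supp] using this
    · exact hxy a ha
  rw [hyx] at hF
  have h3 : 0 < 3 + ε := by linarith
  have hsum : F (x B) + 2 * ((1 + ε) / (1 - ε)) * F (x B) = (3 + ε) / (1 - ε) * F (x B) := by
    field_simp
    ring
  rw [hsum] at hF
  calc (1 - ε) / (3 + ε) * F o ≤ (1 - ε) / (3 + ε) * ((3 + ε) / (1 - ε) * F (x B)) :=
        mul_le_mul_of_nonneg_left hF (by positivity)
    _ = F (x B) := by field_simp
end

section
/- Suppose F is ε-approximately diminishing returns with respect to f. Let x and o' be k-states with x ⪯ o', let e, u ∈ V satisfy x e = x u = 0 and o' e = o' u = 0, let i ∈ {1,…,k}, and assume the greedy-choice inequality Δ_{e,i}F(x) ≥ Δ_{u,i}F(x). Then 2·(F(x+(e,i)) − F(x)) ≥ ((1−ε)/(1+ε))·(F(o'+(u,i)) − F(o'+(e,i))). (This is Case 2 of the single-step inequality used in the ε-ADR analysis of k-Greedy-IS, where the greedily selected pair (e,i) replaces the displaced optimal element u in the same dimension i.) -/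
lemma marg_nonneg_of_epsADR {V : Type*} [Fintype V] [DecidableEq V] {k : ℕ} {ε : ℝ}
    (hε1 : ε < 1) {F f : (V → Fin (k+1)) → ℝ} (hADR : EpsADR ε F f)
    {x : V → Fin (k+1)} {e : V} (hxe : x e = 0) {i : Fin (k+1)} (hi : i ≠ 0) :
    0 ≤ marg F e i x := by
  obtain ⟨-, ⟨hmono, -⟩, -, happ⟩ := hADR
  have hle : kle x (kadd x e i) := by
    intro v hv
    have hve : v ≠ e := by
      rintro rfl
      exact hv hxe
    simp [kadd, hve]
  have hf : 0 ≤ marg f e i x := sub_nonneg.2 (hmono _ _ hle)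
  exact (mul_nonneg (sub_nonneg.2 hε1.le) hf).trans (happ x e (by simp [supp, hxe]) i hi).1

/-- Case 2 single-step inequality in the ε-ADR analysis of k-Greedy-IS. -/
theorem stmt13 {V : Type*} [Fintype V] [DecidableEq V] {k : ℕ} (hk : 1 ≤ k)
    (ε : ℝ) (hε0 : 0 < ε) (hε1 : ε < 1)
    (F f : (V → Fin (k+1)) → ℝ)
    (hADR : EpsADR ε F f)
    (x o' : V → Fin (k+1)) (hxo : kle x o')
    (e u : V) (hxe : x e = 0) (hxu : x u = 0) (hoe : o' e = 0) (hou : o' u = 0)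
    (i : Fin (k+1)) (hi : i ≠ 0)
    (hgr : marg F e i x ≥ marg F u i x) :
    2 * (F (kadd x e i) - F x) ≥
      ((1 - ε) / (1 + ε)) * (F (kadd o' u i) - F (kadd o' e i)) := by
  have hex := marg_nonneg_of_epsADR hε1 hADR hxe hi
  have heo := marg_nonneg_of_epsADR hε1 hADR hoe hi
  obtain ⟨-, ⟨-, hdr⟩, -, happ⟩ := hADR
  have huo : u ∉ supp o' := by simp [supp, hou]
  have hdim := hdr x o' hxo u huo i hi
  have hup := (happ o' u huo i hi).2
  have hlow := (happ x u (by simp [supp, hxu]) i hi).1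
  have hpos : 0 < 1 + ε := by linarith
  have hdiff : F (kadd o' u i) - F (kadd o' e i) ≤ (1 + ε) * marg f u i x := by
    have hscaled := mul_le_mul_of_nonneg_left hdim hpos.le
    unfold marg at *
    linarith
  have hratio : 0 ≤ (1 - ε) / (1 + ε) := div_nonneg (by linarith) hpos.le
  have hbound : (1 - ε) / (1 + ε) * (F (kadd o' u i) - F (kadd o' e i))
      ≤ (1 - ε) * marg f u i x :=
    calc _ ≤ (1 - ε) / (1 + ε) * ((1 + ε) * marg f u i x) :=
          mul_le_mul_of_nonneg_left hdiff hratio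
      _ = (1 - ε) * marg f u i x := by field_simp
  have hFx : F (kadd x e i) - F x = marg F e i x := rfl
  linarith
end

section
/- Let f : Finset V → ℝ be a nonnegative monotone submodular set function with f(∅) = 0, let 0 < ε < 1, and let F : Finset V → ℝ satisfy (1−ε)·f(S) ≤ F(S) ≤ (1+ε)·f(S) for every S ⊆ V (so F is ε-approximately submodular with respect to f). Let B ≤ |V| and let ∅ = X₀ ⊆ X₁ ⊆ ⋯ ⊆ X_B be a greedy sequence for f, i.e. X_j = X_{j−1} ∪ {e_j} with e_j ∉ X_{j−1} and Δ_{e_j}f(X_{j−1}) ≥ Δ_e f(X_{j−1}) for every e ∉ X_{j−1}. Then F(X_B) ≥ ((1−ε)/(1+ε))·(1 − 1/e)·F(S) for every S ⊆ V with |S| ≤ B. -/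
/-!
The classical Nemhauser–Wolsey–Fisher analysis of greedy, applied to `f` and then transferred to `F`.
If no single element raises `f` at `A` by more than `m`, then by submodularity adding a whole set `S`
raises it by at most `|S| * m` (`submodular_union_le`). At a greedy step `m` is the gain just
realised, so for `|S| ≤ B` every step shrinks the gap `f S - f (X j)` by a factor `1 - 1/B`; after
`B` steps the gap is at most `(1 - 1/B)^B * f S ≤ e⁻¹ * f S` (`greedy_ratio`). The sandwich
`(1-ε) f ≤ F ≤ (1+ε) f`, used below at `X B` and above at `S`, costs the factor `(1-ε)/(1+ε)`.
-/

/-- Marginal gains are subadditive: a uniform bound `m` on single-element gains at `A` bounds the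
gain of adding `S` by `S.card * m`. -/
lemma submodular_union_le {V : Type*} [DecidableEq V] (f : Finset V → ℝ)
    (hfsub : ∀ S T : Finset V, f S + f T ≥ f (S ∪ T) + f (S ∩ T))
    (A : Finset V) (m : ℝ) (hm : 0 ≤ m)
    (h : ∀ e, e ∉ A → f (insert e A) - f A ≤ m) (S : Finset V) :
    f (A ∪ S) ≤ f A + S.card * m := by
  induction S using Finset.induction_on with
  | empty => simp
  | insert e S he ih =>
    rw [Finset.card_insert_of_notMem he]
    push_cast
    by_cases heA : e ∈ A
    · have : A ∪ insert e S = A ∪ S := by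
        rw [Finset.union_insert, Finset.insert_eq_of_mem (Finset.mem_union_left _ heA)]
      rw [this]
      linarith
    · have h1 := hfsub (insert e A) (A ∪ S)
      have hu : insert e A ∪ (A ∪ S) = A ∪ insert e S := by
        ext x; simp only [Finset.mem_union, Finset.mem_insert]; tauto
      have hi : insert e A ∩ (A ∪ S) = A := by
        ext x
        simp only [Finset.mem_union, Finset.mem_insert, Finset.mem_inter]
        constructor
        · rintro ⟨rfl | hx, h2 | h2⟩ <;> first | assumption | contradiction
        · tauto
      rw [hu, hi] at h1
      linarith [h e heA]

/-- Greedy of length `B` on a monotone submodular `f` attains a `1 - 1/e` fraction of the value of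
any set of at most `B` elements. -/
lemma greedy_ratio {V : Type*} [DecidableEq V] (f : Finset V → ℝ)
    (hf0 : ∀ S : Finset V, 0 ≤ f S)
    (hfmono : ∀ S T : Finset V, S ⊆ T → f S ≤ f T)
    (hfsub : ∀ S T : Finset V, f S + f T ≥ f (S ∪ T) + f (S ∩ T))
    (hfe : f ∅ = 0) (B : ℕ) (X : ℕ → Finset V) (es : ℕ → V) (hX0 : X 0 = ∅)
    (hstep : ∀ j, 1 ≤ j → j ≤ B →
      es j ∉ X (j-1) ∧ X j = insert (es j) (X (j-1)) ∧
      ∀ e, e ∉ X (j-1) →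
        f (insert (es j) (X (j-1))) - f (X (j-1)) ≥
          f (insert e (X (j-1))) - f (X (j-1)))
    (S : Finset V) (hS : S.card ≤ B) :
    (1 - 1 / Real.exp 1) * f S ≤ f (X B) := by
  -- `1 / B` is a junk value at `B = 0`; there `S = ∅`.
  rcases Nat.eq_zero_or_pos B with rfl | hB
  · have : S = ∅ := Finset.card_eq_zero.mp (Nat.le_zero.mp hS)
    simp [this, hfe, hX0]
  have hB1 : (1 : ℝ) ≤ B := by exact_mod_cast hB
  have hB0 : (0 : ℝ) < B := by linarith
  have hc : (0 : ℝ) ≤ 1 - 1 / B := by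
    rw [sub_nonneg, div_le_one hB0]; exact hB1
  have gap : ∀ j, j ≤ B → f S - f (X j) ≤ (1 - 1 / (B : ℝ)) ^ j * f S := by
    intro j
    induction j with
    | zero => intro _; simp [hX0, hfe]
    | succ j ih =>
      intro hj
      obtain ⟨-, hX, hgr⟩ := hstep (j + 1) (by omega) hj
      simp only [Nat.add_sub_cancel] at hX hgr
      rw [← hX] at hgr
      have hm : 0 ≤ f (X (j + 1)) - f (X j) := by
        rw [sub_nonneg, hX]; exact hfmono _ _ (Finset.subset_insert _ _)
      have h1 := submodular_union_le f hfsub (X j) _ hm (fun e he => hgr e he) S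
      have h2 := hfmono S (X j ∪ S) Finset.subset_union_right
      have h3 : (S.card : ℝ) * (f (X (j + 1)) - f (X j)) ≤ B * (f (X (j + 1)) - f (X j)) :=
        mul_le_mul_of_nonneg_right (by exact_mod_cast hS) hm
      have h4 : (f S - f (X j)) / B ≤ f (X (j + 1)) - f (X j) := by
        rw [div_le_iff₀ hB0]; linarith
      calc f S - f (X (j + 1)) ≤ (f S - f (X j)) - (f S - f (X j)) / B := by linarith
        _ = (1 - 1 / (B : ℝ)) * (f S - f (X j)) := by ring
        _ ≤ (1 - 1 / (B : ℝ)) * ((1 - 1 / (B : ℝ)) ^ j * f S) :=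
          mul_le_mul_of_nonneg_left (ih (by omega)) hc
        _ = (1 - 1 / (B : ℝ)) ^ (j + 1) * f S := by ring
  have hexp : (1 - 1 / (B : ℝ)) ^ B ≤ 1 / Real.exp 1 := by
    rw [one_div (Real.exp 1), ← Real.exp_neg]
    exact Real.one_sub_div_pow_le_exp_neg hB1
  have h5 := gap B le_rfl
  have h6 := mul_le_mul_of_nonneg_right hexp (hf0 S)
  linarith


/-- greedy on the underlying submodular `f` achieves ratio
((1-ε)/(1+ε))·(1 - 1/e) for the ε-approximately submodular `F`. -/
theorem stmt15 {V : Type*} [Fintype V] [DecidableEq V]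
    (ε : ℝ) (hε0 : 0 < ε) (hε1 : ε < 1)
    (f F : Finset V → ℝ)
    (hf0 : ∀ S : Finset V, 0 ≤ f S)
    (hfmono : ∀ S T : Finset V, S ⊆ T → f S ≤ f T)
    (hfsub : ∀ S T : Finset V, f S + f T ≥ f (S ∪ T) + f (S ∩ T))
    (hfe : f ∅ = 0)
    (hAS : ∀ S : Finset V, (1 - ε) * f S ≤ F S ∧ F S ≤ (1 + ε) * f S)
    (B : ℕ) (hB : B ≤ Fintype.card V)
    (X : ℕ → Finset V) (es : ℕ → V)
    (hX0 : X 0 = ∅)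
    (hstep : ∀ j, 1 ≤ j → j ≤ B →
      es j ∉ X (j-1) ∧ X j = insert (es j) (X (j-1)) ∧
      ∀ e, e ∉ X (j-1) →
        f (insert (es j) (X (j-1))) - f (X (j-1)) ≥
          f (insert e (X (j-1))) - f (X (j-1))) :
    ∀ S : Finset V, S.card ≤ B →
      F (X B) ≥ ((1 - ε) / (1 + ε)) * (1 - 1 / Real.exp 1) * F S := by
  intro S hS
  have hg := greedy_ratio f hf0 hfmono hfsub hfe B X es hX0 hstep S hS
  have hc : 0 ≤ 1 - 1 / Real.exp 1 := by
    rw [sub_nonneg, div_le_one (Real.exp_pos 1)]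
    exact Real.one_le_exp zero_le_one
  have hp : 0 < 1 + ε := by linarith
  have hq : 0 ≤ 1 - ε := by linarith
  have hFS : F S / (1 + ε) ≤ f S := by
    rw [div_le_iff₀ hp]; linarith [(hAS S).2]
  calc (1 - ε) / (1 + ε) * (1 - 1 / Real.exp 1) * F S
      = (1 - ε) * ((1 - 1 / Real.exp 1) * (F S / (1 + ε))) := by ring
    _ ≤ (1 - ε) * ((1 - 1 / Real.exp 1) * f S) := by gcongr
    _ ≤ (1 - ε) * f (X B) := by gcongr
    _ ≤ F (X B) := (hAS (X B)).1
end

section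
/- For all real numbers ε and B with 0 < ε < 1 and B ≥ 1/(4(e−1)ε) + 1/2, one has 1/(1 + 4Bε/(1−ε)²) ≤ ((1−ε)/(1+ε))·(1 − 1/e). (Consequently, under this condition on B, the approximation ratio ((1−ε)/(1+ε))(1−1/e) obtained by running the greedy algorithm on f dominates the ratio (1/(1+4Bε/(1−ε)²))·(1−((1−ε)/(1+ε))^{2B}(1−1/B)^B) of running greedy on F, whose leading factor is 1/(1+4Bε/(1−ε)²).) -/
/-- for 0 < ε < 1 and B ≥ 1/(4(e-1)ε) + 1/2,
1/(1 + 4Bε/(1-ε)²) ≤ ((1-ε)/(1+ε))·(1 - 1/e). -/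
theorem stmt18 (ε B : ℝ) (hε0 : 0 < ε) (hε1 : ε < 1)
    (hB : B ≥ 1 / (4 * (Real.exp 1 - 1) * ε) + 1 / 2) :
    1 / (1 + 4 * B * ε / (1 - ε)^2) ≤
      ((1 - ε) / (1 + ε)) * (1 - 1 / Real.exp 1) := by
  have he : 0 < Real.exp 1 - 1 := by linarith [Real.add_one_lt_exp (one_ne_zero (α := ℝ))]
  have he0 : 0 < Real.exp 1 := Real.exp_pos 1
  generalize Real.exp 1 = e at *
  have h1 : 0 < 1 - ε := by linarith
  -- The hypothesis on `B` with denominators cleared.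
  have hB' : 1 + 2 * ε * (e - 1) ≤ 4 * B * ε * (e - 1) := by
    have h := mul_le_mul_of_nonneg_right hB (by positivity : 0 ≤ 4 * (e - 1) * ε)
    have h2 : (1 / (4 * (e - 1) * ε) + 1 / 2) * (4 * (e - 1) * ε)
        = 1 + 2 * ε * (e - 1) := by
      field_simp
      ring
    linarith
  have hBpos : 0 < 4 * B * ε := by
    have h : 0 < 4 * B * ε * (e - 1) := by
      have : 0 < 2 * ε * (e - 1) := by positivity
      linarith
    exact pos_of_mul_pos_left h he.le
  have hl : 1 / (1 + 4 * B * ε / (1 - ε)^2) = (1 - ε)^2 / ((1 - ε)^2 + 4 * B * ε) := by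
    field_simp
  have hr : ((1 - ε) / (1 + ε)) * (1 - 1 / e) = (1 - ε) * (e - 1) / ((1 + ε) * e) := by
    field_simp
  rw [hl, hr, div_le_div_iff₀ (by positivity) (by positivity)]
  -- After dividing by `1 - ε` and inserting the bound on `B`, the difference of the two sides
  -- is at least `ε² * e + ε² * (e - 1)`.
  have key : (1 - ε) * (1 + ε) * e ≤ (e - 1) * ((1 - ε)^2 + 4 * B * ε) := by
    have h3 : 0 ≤ ε^2 * e := by positivity
    have h4 : 0 ≤ ε^2 * (e - 1) := by positivity
    linarith
  calc (1 - ε)^2 * ((1 + ε) * e) = (1 - ε) * ((1 - ε) * (1 + ε) * e) := by ring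
    _ ≤ (1 - ε) * ((e - 1) * ((1 - ε)^2 + 4 * B * ε)) := by gcongr
    _ = _ := by ring
end
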